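/- arXiv:1702.05234 — 4 statements merged into one kernel-verified Lean document; each statement's English description precedes it below -/
import Mathlib

section
/- Let 0 < τ < x. Then the kernel F(x,τ) = ((k+1)^{μ+β+1} x^{(k+1)(−α−β−2μ)} / Γ(α)) · τ^{(k+1)μ} (x^{k+1} − τ^{k+1})^{α−1} · ₂F₁(α+β+μ, −η; α; 1 − (τ/x)^{k+1}) is strictly positive. -/
/-!
The hypotheses give `α + β + μ > 0`, `-η > 0` and `α > 0`, and `z = 1 - (τ / x) ^ (k + 1)` lies in
`(0, 1)`. So the Gauss series at `z` has positive terms. It converges by the ratio test, the ratio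
of consecutive terms tending to `z < 1`; its sum is therefore genuinely positive (and not the
default value `0` of a divergent `tsum`). All the other factors of the kernel are powers
of positive numbers or `1 / Γ(α)`.
-/

open MeasureTheory Real Set

/-- The Gauss hypergeometric series `₂F₁(a, b; c; z)`. -/
noncomputable def gauss2F1 (a b c z : ℝ) : ℝ :=
  ∑' n : ℕ, ((ascPochhammer ℝ n).eval a * (ascPochhammer ℝ n).eval b /
    ((ascPochhammer ℝ n).eval c * (n.factorial : ℝ))) * z ^ n

/-- The kernel `F(x, τ)` of the generalized k-fractional integral operator. -/
noncomputable def Fker (α β η μ k x τ : ℝ) : ℝ :=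
  ((k + 1) ^ (μ + β + 1) * x ^ ((k + 1) * (-α - β - 2 * μ)) / Real.Gamma α) *
    τ ^ ((k + 1) * μ) * (x ^ (k + 1) - τ ^ (k + 1)) ^ (α - 1) *
    gauss2F1 (α + β + μ) (-η) α (1 - (τ / x) ^ (k + 1))

/-- The generalized k-fractional integral operator `I^{α,β,η,μ}_{x,k}[f]`. -/
noncomputable def genKInt (α β η μ k x : ℝ) (f : ℝ → ℝ) : ℝ :=
  ∫ τ in (0:ℝ)..x, Fker α β η μ k x τ * τ ^ k * f τ

/-- On `(0, 1)` the Gauss series with positive parameters converges, with positive terms. -/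
lemma gauss2F1_pos {a b c z : ℝ} (ha : 0 < a) (hb : 0 < b) (hc : 0 < c)
    (hz0 : 0 < z) (hz1 : z < 1) : 0 < gauss2F1 a b c z := by
  unfold gauss2F1
  set t : ℕ → ℝ := fun n => ((ascPochhammer ℝ n).eval a * (ascPochhammer ℝ n).eval b /
    ((ascPochhammer ℝ n).eval c * (n.factorial : ℝ))) * z ^ n with ht
  have hpos : ∀ n, 0 < t n := fun n => by
    have h1 := ascPochhammer_pos n a ha
    have h2 := ascPochhammer_pos n b hb
    have h3 := ascPochhammer_pos n c hc
    simp only [ht]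
    positivity
  have hratio : ∀ n : ℕ, ‖t (n + 1)‖ / ‖t n‖ =
      (a + 1 * n) / (c + 1 * n) * ((b + 1 * n) / (1 + 1 * n)) * z := fun n => by
    rw [Real.norm_of_nonneg (hpos _).le, Real.norm_of_nonneg (hpos _).le]
    have h1 := ascPochhammer_pos n a ha
    have h2 := ascPochhammer_pos n b hb
    have h3 := ascPochhammer_pos n c hc
    have h4 : (0 : ℝ) < c + n := by positivity
    have h5 : (0 : ℝ) < 1 + n := by positivity
    have h6 : (0 : ℝ) < n + 1 := by positivity
    simp only [ht, ascPochhammer_succ_eval, Nat.factorial_succ, pow_succ, one_mul]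
    push_cast
    field_simp
    ring
  have hlim : Filter.Tendsto (fun n : ℕ => ‖t (n + 1)‖ / ‖t n‖) Filter.atTop (nhds z) := by
    simp only [hratio]
    have h := ((tendsto_add_mul_div_add_mul_atTop_nhds a c 1 (one_ne_zero (α := ℝ))).mul
      (tendsto_add_mul_div_add_mul_atTop_nhds b 1 1 (one_ne_zero (α := ℝ)))).mul_const z
    simpa using h
  have hsum : Summable t := summable_of_ratio_test_tendsto_lt_one hz1
    (Filter.Eventually.of_forall fun n => (hpos n).ne') hlim
  exact hsum.tsum_pos (fun n => (hpos n).le) 0 (hpos 0)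

theorem kernel_pos (α β η μ k x τ : ℝ)
    (hk : 0 ≤ k) (hα : max 0 (-β - μ) < α) (hβ : β < 1) (hμ : -1 < μ)
    (hη1 : β - 1 < η) (hη2 : η < 0) (hτ : 0 < τ) (hτx : τ < x) :
    0 < Fker α β η μ k x τ := by
  obtain ⟨hα0, hα1⟩ := max_lt_iff.mp hα
  have hx : 0 < x := hτ.trans hτx
  have hk1 : 0 < k + 1 := by linarith
  have hd : 0 < x ^ (k + 1) - τ ^ (k + 1) :=
    sub_pos.mpr (Real.rpow_lt_rpow hτ.le hτx hk1)
  have hr0 : 0 < (τ / x) ^ (k + 1) := Real.rpow_pos_of_pos (div_pos hτ hx) _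
  have hr1 : (τ / x) ^ (k + 1) < 1 :=
    Real.rpow_lt_one (div_pos hτ hx).le ((div_lt_one hx).mpr hτx) hk1
  have hF : 0 < gauss2F1 (α + β + μ) (-η) α (1 - (τ / x) ^ (k + 1)) :=
    gauss2F1_pos (by linarith) (by linarith) hα0 (by linarith) (by linarith)
  have hG := Real.Gamma_pos_of_pos hα0
  unfold Fker
  positivity
end

section
/- Let p ≥ 1 and let f, g be two positive continuous functions on [0, ∞) such that for x > 0 the integrals I^{α,β,η,μ}_{x,k}[f^p] and I^{α,β,η,μ}_{x,k}[g^p] are finite. If 0 < m ≤ f(τ)/g(τ) ≤ M for all τ ∈ (0, x), then (I^{α,β,η,μ}_{x,k}[f^p])^{1/p} + (I^{α,β,η,μ}_{x,k}[g^p])^{1/p} ≤ ((1 + M(m+2)) / ((m+1)(M+1))) · (I^{α,β,η,μ}_{x,k}[(f+g)^p])^{1/p}. -/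
/-!
The kernel is nonnegative on `(0, x)`: under the parameter assumptions `α + β + μ`, `-η` and `α` are
positive, so every term of the hypergeometric series at a point of `(0, 1)` is nonnegative
(`gauss2F1_nonneg`, `Fker_nonneg`). Hence a pointwise bound `h ≤ c * s` passes to the quantities
`(I[h ^ p]) ^ (1 / p)` (`genKInt_rpow_le`). The ratio bounds say `f ≤ M / (M + 1) * (f + g)` and
`g ≤ 1 / (m + 1) * (f + g)`, and `M / (M + 1) + 1 / (m + 1)` is the constant in the claim.
-/

open MeasureTheory Real Set

/-- No convergence is needed: a divergent series has the junk value `0`. -/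
theorem gauss2F1_nonneg {a b c z : ℝ} (ha : 0 < a) (hb : 0 < b) (hc : 0 < c) (hz : 0 ≤ z) :
    0 ≤ gauss2F1 a b c z := by
  refine tsum_nonneg fun n => ?_
  have h1 := ascPochhammer_pos n a ha
  have h2 := ascPochhammer_pos n b hb
  have h3 := ascPochhammer_pos n c hc
  positivity

theorem Fker_nonneg {α β η μ k x τ : ℝ} (hk : 0 ≤ k) (hα : max 0 (-β - μ) < α) (hη : η < 0)
    (hτ : τ ∈ Ioo 0 x) : 0 ≤ Fker α β η μ k x τ := by
  obtain ⟨h0, hx⟩ := hτ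
  obtain ⟨hα0, hα1⟩ := max_lt_iff.1 hα
  have hx0 : 0 < x := h0.trans hx
  have hk1 : 0 ≤ k + 1 := by linarith
  have hG := Real.Gamma_pos_of_pos hα0
  have hd : 0 ≤ x ^ (k + 1) - τ ^ (k + 1) :=
    sub_nonneg.2 (Real.rpow_le_rpow h0.le hx.le hk1)
  have hz : 0 ≤ 1 - (τ / x) ^ (k + 1) :=
    sub_nonneg.2 (Real.rpow_le_one (by positivity) ((div_le_one hx0).2 hx.le) hk1)
  have hF : 0 ≤ gauss2F1 (α + β + μ) (-η) α (1 - (τ / x) ^ (k + 1)) :=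
    gauss2F1_nonneg (by linarith) (by linarith) hα0 hz
  unfold Fker
  have := Real.rpow_nonneg hd (α - 1)
  positivity

theorem genKInt_rpow_le {α β η μ k x p c : ℝ} {h s : ℝ → ℝ}
    (hk : 0 ≤ k) (hα : max 0 (-β - μ) < α) (hη : η < 0) (hx : 0 < x) (hp : 1 ≤ p) (hc : 0 ≤ c)
    (hh : ∀ τ ∈ Ioo 0 x, 0 ≤ h τ) (hs : ∀ τ ∈ Ioo 0 x, 0 ≤ s τ)
    (hle : ∀ τ ∈ Ioo 0 x, h τ ≤ c * s τ)
    (hih : IntervalIntegrable (fun τ => Fker α β η μ k x τ * τ ^ k * (h τ ^ p)) volume 0 x)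
    (his : IntervalIntegrable (fun τ => Fker α β η μ k x τ * τ ^ k * (s τ ^ p)) volume 0 x) :
    (genKInt α β η μ k x (fun τ => h τ ^ p)) ^ (1 / p) ≤
      c * (genKInt α β η μ k x (fun τ => s τ ^ p)) ^ (1 / p) := by
  have hp0 : 0 < p := by linarith
  have hK : ∀ τ ∈ Ioo 0 x, 0 ≤ Fker α β η μ k x τ * τ ^ k := fun τ hτ =>
    mul_nonneg (Fker_nonneg hk hα hη hτ) (Real.rpow_nonneg hτ.1.le _)
  have nonneg : ∀ u : ℝ → ℝ, (∀ τ ∈ Ioo 0 x, 0 ≤ u τ) →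
      0 ≤ genKInt α β η μ k x (fun τ => u τ ^ p) := by
    intro u hu
    unfold genKInt
    rw [intervalIntegral.integral_of_le hx.le, integral_Ioc_eq_integral_Ioo]
    exact setIntegral_nonneg measurableSet_Ioo fun τ hτ =>
      mul_nonneg (hK τ hτ) (Real.rpow_nonneg (hu τ hτ) _)
  have key : genKInt α β η μ k x (fun τ => h τ ^ p) ≤
      c ^ p * genKInt α β η μ k x (fun τ => s τ ^ p) := by
    unfold genKInt
    rw [← intervalIntegral.integral_const_mul]
    refine intervalIntegral.integral_mono_on_of_le_Ioo hx.le hih (his.const_mul _) fun τ hτ => ?_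
    have h1 : h τ ^ p ≤ c ^ p * s τ ^ p := by
      rw [← Real.mul_rpow hc (hs τ hτ)]
      exact Real.rpow_le_rpow (hh τ hτ) (hle τ hτ) hp0.le
    calc Fker α β η μ k x τ * τ ^ k * h τ ^ p
        ≤ Fker α β η μ k x τ * τ ^ k * (c ^ p * s τ ^ p) :=
          mul_le_mul_of_nonneg_left h1 (hK τ hτ)
      _ = _ := by ring
  calc _ ≤ (c ^ p * genKInt α β η μ k x (fun τ => s τ ^ p)) ^ (1 / p) :=
        Real.rpow_le_rpow (nonneg h hh) key (by positivity)
    _ = _ := by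
        rw [Real.mul_rpow (by positivity) (nonneg s hs), ← Real.rpow_mul hc,
          mul_one_div_cancel hp0.ne', Real.rpow_one]

theorem reverse_minkowski (α β η μ k x : ℝ)
    (hk : 0 ≤ k) (hα : max 0 (-β - μ) < α) (hβ : β < 1) (hμ : -1 < μ)
    (hη1 : β - 1 < η) (hη2 : η < 0) (hx : 0 < x) (p m M : ℝ) (f g : ℝ → ℝ)
    (hfc : ContinuousOn f (Ici 0)) (hgc : ContinuousOn g (Ici 0))
    (hfpos : ∀ t ∈ Ici (0:ℝ), 0 < f t) (hgpos : ∀ t ∈ Ici (0:ℝ), 0 < g t)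
    (hp : 1 ≤ p)
    (hfin_f : IntervalIntegrable (fun τ => Fker α β η μ k x τ * τ ^ k * (f τ ^ p)) volume 0 x)
    (hfin_g : IntervalIntegrable (fun τ => Fker α β η μ k x τ * τ ^ k * (g τ ^ p)) volume 0 x)
    (hm : 0 < m)
    (hbd : ∀ τ ∈ Ioo (0:ℝ) x, m ≤ f τ / g τ ∧ f τ / g τ ≤ M) :
    (genKInt α β η μ k x (fun τ => f τ ^ p)) ^ (1 / p) + (genKInt α β η μ k x (fun τ => g τ ^ p)) ^ (1 / p) ≤
      ((1 + M * (m + 2)) / ((m + 1) * (M + 1))) *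
        (genKInt α β η μ k x (fun τ => (f τ + g τ) ^ p)) ^ (1 / p) := by
  have hf : ∀ τ ∈ Ioo 0 x, 0 < f τ := fun τ hτ => hfpos τ hτ.1.le
  have hg : ∀ τ ∈ Ioo 0 x, 0 < g τ := fun τ hτ => hgpos τ hτ.1.le
  have hM : 0 < M := by
    have h := hbd (x / 2) ⟨by linarith, by linarith⟩
    linarith [h.1, h.2]
  -- `(f + g) ^ p` is `f ^ p` times a continuous factor, so the kernel integrates it too.
  have hfin : IntervalIntegrable
      (fun τ => Fker α β η μ k x τ * τ ^ k * ((f τ + g τ) ^ p)) volume 0 x := by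
    have hsub : uIcc 0 x ⊆ Ici (0 : ℝ) := by
      rw [uIcc_of_le hx.le]
      exact Icc_subset_Ici_self
    have hcont : ContinuousOn (fun τ => ((f τ + g τ) / f τ) ^ p) (uIcc 0 x) :=
      (((hfc.add hgc).div hfc fun τ hτ => (hfpos τ hτ).ne').rpow_const
        fun τ _ => Or.inr (by linarith)).mono hsub
    refine (hfin_f.mul_continuousOn hcont).congr fun τ hτ => ?_
    have hτ' : τ ∈ Ici (0 : ℝ) := hsub (uIoc_subset_uIcc hτ)
    have h1 := hfpos τ hτ'
    have h2 := hgpos τ hτ'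
    rw [mul_assoc, ← Real.mul_rpow h1.le (by positivity), mul_div_cancel₀ _ h1.ne']
  have hs : ∀ τ ∈ Ioo 0 x, 0 ≤ f τ + g τ := fun τ hτ => (add_pos (hf τ hτ) (hg τ hτ)).le
  have hA := genKInt_rpow_le (c := M / (M + 1)) (s := fun τ => f τ + g τ) hk hα hη2 hx hp
    (by positivity) (fun τ hτ => (hf τ hτ).le) hs
    (fun τ hτ => by
      have h := (div_le_iff₀ (hg τ hτ)).1 (hbd τ hτ).2
      rw [div_mul_eq_mul_div, le_div_iff₀ (by positivity)]
      linarith) hfin_f hfin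
  have hB := genKInt_rpow_le (c := 1 / (m + 1)) (s := fun τ => f τ + g τ) hk hα hη2 hx hp
    (by positivity) (fun τ hτ => (hg τ hτ).le) hs
    (fun τ hτ => by
      have h := (le_div_iff₀ (hg τ hτ)).1 (hbd τ hτ).1
      rw [div_mul_eq_mul_div, le_div_iff₀ (by positivity)]
      linarith) hfin_g hfin
  have hconst : (1 + M * (m + 2)) / ((m + 1) * (M + 1)) = M / (M + 1) + 1 / (m + 1) := by
    field_simp
    ring
  rw [hconst, add_mul]
  exact add_le_add hA hB
end

section
/- Let p ≥ 1 and let f, g be two positive continuous functions on [0, ∞) such that for x > 0 the integral I^{α,β,η,μ}_{x,k}[(f+g)^p] is finite. If 0 < m ≤ f(τ)/g(τ) for all τ ∈ (0, x), then (I^{α,β,η,μ}_{x,k}[g^p])^{1/p} ≤ (1/(m+1)) · (I^{α,β,η,μ}_{x,k}[(f+g)^p])^{1/p}. -/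
/-! Since `α + β + μ`, `-η` and `α` are positive, every coefficient of the hypergeometric series in
the kernel is nonnegative, so the kernel is nonnegative on `(0, x)`. There `m ≤ f / g` gives
`(m + 1) g ≤ f + g`, hence `g ^ p ≤ ((m + 1) ^ p)⁻¹ (f + g) ^ p`; integrating this against the
kernel and taking `p`-th roots gives the claim. -/

open MeasureTheory Real Set

theorem upper_bound_g (α β η μ k x : ℝ)
    (hk : 0 ≤ k) (hα : max 0 (-β - μ) < α) (hβ : β < 1) (hμ : -1 < μ)
    (hη1 : β - 1 < η) (hη2 : η < 0) (hx : 0 < x) (p m : ℝ) (f g : ℝ → ℝ)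
    (hfc : ContinuousOn f (Ici 0)) (hgc : ContinuousOn g (Ici 0))
    (hfpos : ∀ t ∈ Ici (0:ℝ), 0 < f t) (hgpos : ∀ t ∈ Ici (0:ℝ), 0 < g t)
    (hp : 1 ≤ p) (hm : 0 < m)
    (hfin : IntervalIntegrable (fun τ => Fker α β η μ k x τ * τ ^ k * ((f τ + g τ) ^ p)) volume 0 x)
    (hbd : ∀ τ ∈ Ioo (0:ℝ) x, m ≤ f τ / g τ) :
    (genKInt α β η μ k x (fun τ => g τ ^ p)) ^ (1 / p) ≤
      (1 / (m + 1)) * (genKInt α β η μ k x (fun τ => (f τ + g τ) ^ p)) ^ (1 / p) := by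
  have hp0 : 0 < p := by linarith
  have hc : 0 < m + 1 := by linarith
  have hker : ∀ τ ∈ Ioo 0 x, 0 ≤ Fker α β η μ k x τ * τ ^ k := fun τ hτ =>
    mul_nonneg (Fker_nonneg hk hα hη2 hτ) (Real.rpow_nonneg hτ.1.le k)
  have hnn : ∀ τ ∈ Ioo 0 x, 0 ≤ Fker α β η μ k x τ * τ ^ k * g τ ^ p := fun τ hτ =>
    mul_nonneg (hker τ hτ) (Real.rpow_nonneg (hgpos τ hτ.1.le).le p)
  have hnn' : ∀ τ ∈ Ioo 0 x, 0 ≤ Fker α β η μ k x τ * τ ^ k * (f τ + g τ) ^ p := fun τ hτ =>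
    mul_nonneg (hker τ hτ)
      (Real.rpow_nonneg (add_pos (hfpos τ hτ.1.le) (hgpos τ hτ.1.le)).le p)
  have hle : ∀ τ ∈ Ioo 0 x, Fker α β η μ k x τ * τ ^ k * g τ ^ p ≤
      ((m + 1) ^ p)⁻¹ * (Fker α β η μ k x τ * τ ^ k * (f τ + g τ) ^ p) := by
    intro τ hτ
    have hg := hgpos τ hτ.1.le
    have h1 : (m + 1) * g τ ≤ f τ + g τ := by
      have := (le_div_iff₀ hg).1 (hbd τ hτ)
      linarith
    have h2 := Real.rpow_le_rpow (by positivity) h1 hp0.le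
    rw [Real.mul_rpow hc.le hg.le] at h2
    rw [mul_left_comm]
    exact mul_le_mul_of_nonneg_left ((le_inv_mul_iff₀ (Real.rpow_pos_of_pos hc p)).2 h2)
      (hker τ hτ)
  have hI : ∀ h : ℝ → ℝ, genKInt α β η μ k x h =
      ∫ τ in Ioo 0 x, Fker α β η μ k x τ * τ ^ k * h τ := fun h => by
    rw [genKInt, intervalIntegral.integral_of_le hx.le, integral_Ioc_eq_integral_Ioo]
  have hfin' := (intervalIntegrable_iff_integrableOn_Ioo_of_le hx.le).1 hfin
  have hA : 0 ≤ genKInt α β η μ k x (fun τ => g τ ^ p) := by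
    rw [hI]
    exact setIntegral_nonneg measurableSet_Ioo hnn
  have hB : 0 ≤ genKInt α β η μ k x (fun τ => (f τ + g τ) ^ p) := by
    rw [hI]
    exact setIntegral_nonneg measurableSet_Ioo hnn'
  have hAB : genKInt α β η μ k x (fun τ => g τ ^ p) ≤
      ((m + 1) ^ p)⁻¹ * genKInt α β η μ k x (fun τ => (f τ + g τ) ^ p) := by
    rw [hI, hI, ← integral_const_mul]
    -- Only the dominating integrand needs to be integrable, as the smaller one is nonnegative.
    exact integral_mono_of_nonneg (ae_restrict_of_forall_mem measurableSet_Ioo hnn)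
      (hfin'.const_mul _) (ae_restrict_of_forall_mem measurableSet_Ioo hle)
  refine (Real.rpow_le_rpow hA hAB (by positivity)).trans_eq ?_
  rw [Real.mul_rpow (by positivity) hB, Real.inv_rpow (by positivity), ← Real.rpow_mul hc.le,
    mul_one_div_cancel hp0.ne', Real.rpow_one, one_div (m + 1)]
end

section
/- Let γ > 0, δ > 0, and let f, g be two positive continuous functions on [0, ∞) such that f is non-decreasing and g is non-increasing, and for x > 0 the integrals I^{α,β,η,μ}_{x,k}[f^γ g^δ], I^{α,β,η,μ}_{x,k}[f^γ], I^{α,β,η,μ}_{x,k}[g^δ] and I^{α,β,η,μ}_{x,k}[1] are finite. Then I^{α,β,η,μ}_{x,k}[f^γ g^δ] · I^{α,β,η,μ}_{x,k}[1] ≤ I^{α,β,η,μ}_{x,k}[f^γ] · I^{α,β,η,μ}_{x,k}[g^δ]; equivalently, I^{α,β,η,μ}_{x,k}[f^γ g^δ] ≤ (I^{α,β,η,μ}_{x,k}[1])^{−1} · I^{α,β,η,μ}_{x,k}[f^γ] · I^{α,β,η,μ}_{x,k}[g^δ]. -/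
/-!
The weight `w τ = Fker α β η μ k x τ * τ ^ k` is nonnegative on `(0, x)`: the parameters
`α + β + μ`, `-η` and `α` are positive, so every term of the hypergeometric series at a nonnegative
argument is nonnegative (`gauss2F1_nonneg`), and the other factors are nonnegative as well
(`weight_nonneg`).

Since `F = f ^ γ` is non-decreasing and `G = g ^ δ` is non-increasing,
`(F s - F t) * (G s - G t) ≤ 0` for all `s`, `t`. Integrating against `w s` and then against `w t`
gives the product form of the inequality, which is Chebyshev's integral inequality for an arbitrary
nonnegative weight (`chebyshev_weighted`).

For the form with the inverse, divide by `I[1]` when `I[1] > 0`. When `I[1] = 0`, the bound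
`F * G ≤ F x * G 0` on `(0, x)` gives `I[F * G] ≤ F x * G 0 * I[1] = 0`. This case split avoids any
discussion of the convergence of the hypergeometric series.
-/

open MeasureTheory Real Set

theorem weight_nonneg {α β η μ k x τ : ℝ} (hk : 0 ≤ k) (hα : max 0 (-β - μ) < α) (hη : η < 0)
    (hx : 0 < x) (hτ : τ ∈ Ioo 0 x) : 0 ≤ Fker α β η μ k x τ * τ ^ k := by
  obtain ⟨h0, hτx⟩ := hτ
  obtain ⟨hα0, hα1⟩ := max_lt_iff.1 hα
  have hk1 : 0 < k + 1 := by linarith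
  have hG : 0 < Real.Gamma α := Real.Gamma_pos_of_pos hα0
  have hpow : 0 ≤ x ^ (k + 1) - τ ^ (k + 1) :=
    sub_nonneg.2 (Real.rpow_le_rpow h0.le hτx.le hk1.le)
  have hz : 0 ≤ 1 - (τ / x) ^ (k + 1) :=
    sub_nonneg.2 (Real.rpow_le_one (by positivity) ((div_le_one hx).2 hτx.le) hk1.le)
  have hF : 0 ≤ gauss2F1 (α + β + μ) (-η) α (1 - (τ / x) ^ (k + 1)) :=
    gauss2F1_nonneg (by linarith) (by linarith) hα0 hz
  unfold Fker
  positivity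

/-- Chebyshev's integral inequality for oppositely ordered functions and a nonnegative weight. -/
theorem chebyshev_weighted {a b : ℝ} (hab : a ≤ b) {w F G : ℝ → ℝ}
    (hw : ∀ t ∈ Ioo a b, 0 ≤ w t)
    (hFG : ∀ s ∈ Ioo a b, ∀ t ∈ Ioo a b, (F s - F t) * (G s - G t) ≤ 0)
    (hiFG : IntervalIntegrable (fun t => w t * (F t * G t)) volume a b)
    (hiF : IntervalIntegrable (fun t => w t * F t) volume a b)
    (hiG : IntervalIntegrable (fun t => w t * G t) volume a b)
    (hi1 : IntervalIntegrable (fun t => w t * 1) volume a b) :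
    (∫ t in a..b, w t * (F t * G t)) * (∫ t in a..b, w t * 1) ≤
      (∫ t in a..b, w t * F t) * (∫ t in a..b, w t * G t) := by
  -- Integrating an arbitrary combination `p * F * G + q * F + r * G + u` against the weight.
  have key (p q r u : ℝ)
      (h : ∀ t ∈ Ioo a b, p * (F t * G t) + q * F t + r * G t + u ≤ 0) :
      p * (∫ t in a..b, w t * (F t * G t)) + q * (∫ t in a..b, w t * F t)
        + r * (∫ t in a..b, w t * G t) + u * (∫ t in a..b, w t * 1) ≤ 0 := by
    have i1 := (hiFG.const_mul p).add (hiF.const_mul q)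
    have i2 := i1.add (hiG.const_mul r)
    have i3 := i2.add (hi1.const_mul u)
    have hle := intervalIntegral.integral_mono_on_of_le_Ioo hab i3
      (intervalIntegrable_const (c := (0 : ℝ))) (fun t ht => by
        have := mul_nonpos_of_nonneg_of_nonpos (hw t ht) (h t ht)
        linarith)
    rw [intervalIntegral.integral_add i2 (hi1.const_mul u),
      intervalIntegral.integral_zero,
      intervalIntegral.integral_add i1 (hiG.const_mul r),
      intervalIntegral.integral_add (hiFG.const_mul p) (hiF.const_mul q)] at hle
    simpa only [intervalIntegral.integral_const_mul] using hle
  -- Integrate `(F s - F t) * (G s - G t) ≤ 0` against `w t`, then the result against `w s`.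
  have inner (s : ℝ) (hs : s ∈ Ioo a b) := key 1 (-G s) (-F s) (F s * G s) fun t ht => by
    linarith [hFG s hs t ht]
  have outer := key (∫ t in a..b, w t * 1) (-∫ t in a..b, w t * G t) (-∫ t in a..b, w t * F t)
    (∫ t in a..b, w t * (F t * G t)) fun s hs => by linarith [inner s hs]
  linarith

theorem chebyshev_type (α β η μ k x : ℝ)
    (hk : 0 ≤ k) (hα : max 0 (-β - μ) < α) (hβ : β < 1) (hμ : -1 < μ)
    (hη1 : β - 1 < η) (hη2 : η < 0) (hx : 0 < x) (γ δ : ℝ) (f g : ℝ → ℝ)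
    (hfc : ContinuousOn f (Ici 0)) (hgc : ContinuousOn g (Ici 0))
    (hfpos : ∀ t ∈ Ici (0:ℝ), 0 < f t) (hgpos : ∀ t ∈ Ici (0:ℝ), 0 < g t)
    (hγ : 0 < γ) (hδ : 0 < δ)
    (hmono : MonotoneOn f (Ici 0)) (hanti : AntitoneOn g (Ici 0))
    (hfin_fg : IntervalIntegrable (fun τ => Fker α β η μ k x τ * τ ^ k * (f τ ^ γ * g τ ^ δ)) volume 0 x)
    (hfin_f : IntervalIntegrable (fun τ => Fker α β η μ k x τ * τ ^ k * (f τ ^ γ)) volume 0 x)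
    (hfin_g : IntervalIntegrable (fun τ => Fker α β η μ k x τ * τ ^ k * (g τ ^ δ)) volume 0 x)
    (hfin_one : IntervalIntegrable (fun τ => Fker α β η μ k x τ * τ ^ k * ((1:ℝ))) volume 0 x) :
    (genKInt α β η μ k x (fun τ => f τ ^ γ * g τ ^ δ)) * (genKInt α β η μ k x (fun τ => (1:ℝ))) ≤
        (genKInt α β η μ k x (fun τ => f τ ^ γ)) * (genKInt α β η μ k x (fun τ => g τ ^ δ)) ∧
      genKInt α β η μ k x (fun τ => f τ ^ γ * g τ ^ δ) ≤
        (genKInt α β η μ k x (fun τ => (1:ℝ)))⁻¹ * ((genKInt α β η μ k x (fun τ => f τ ^ γ)) * (genKInt α β η μ k x (fun τ => g τ ^ δ))) := by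
  have hw : ∀ t ∈ Ioo 0 x, 0 ≤ Fker α β η μ k x t * t ^ k :=
    fun t ht => weight_nonneg hk hα hη2 hx ht
  have hF : MonotoneOn (fun t => f t ^ γ) (Ici 0) := fun s hs t ht hst =>
    Real.rpow_le_rpow (hfpos s hs).le (hmono hs ht hst) hγ.le
  have hG : AntitoneOn (fun t => g t ^ δ) (Ici 0) := fun s hs t ht hst =>
    Real.rpow_le_rpow (hgpos t ht).le (hanti hs ht hst) hδ.le
  have hmain := chebyshev_weighted hx.le hw (F := fun t => f t ^ γ) (G := fun t => g t ^ δ)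
    (fun s hs t ht => by
      have hs0 : s ∈ Ici (0 : ℝ) := hs.1.le
      have ht0 : t ∈ Ici (0 : ℝ) := ht.1.le
      rcases le_total s t with hst | hst
      · exact mul_nonpos_of_nonpos_of_nonneg (sub_nonpos.2 (hF hs0 ht0 hst))
          (sub_nonneg.2 (hG hs0 ht0 hst))
      · exact mul_nonpos_of_nonneg_of_nonpos (sub_nonneg.2 (hF ht0 hs0 hst))
          (sub_nonpos.2 (hG ht0 hs0 hst)))
    hfin_fg hfin_f hfin_g hfin_one
  have hone : 0 ≤ genKInt α β η μ k x (fun _ => (1 : ℝ)) := by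
    have := intervalIntegral.integral_mono_on_of_le_Ioo hx.le
      (intervalIntegrable_const (c := (0 : ℝ))) hfin_one
      (fun t ht => by simpa using hw t ht)
    simpa only [genKInt, intervalIntegral.integral_zero] using this
  refine ⟨hmain, ?_⟩
  rcases hone.eq_or_lt with h0 | hpos
  · have hle := intervalIntegral.integral_mono_on_of_le_Ioo hx.le hfin_fg
      (hfin_one.mul_const (f x ^ γ * g 0 ^ δ)) (fun t ht => by
        have h0t : t ∈ Ici (0 : ℝ) := ht.1.le
        have h1 : f t ^ γ ≤ f x ^ γ := hF h0t hx.le ht.2.le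
        have h2 : g t ^ δ ≤ g 0 ^ δ := hG (mem_Ici.2 le_rfl) h0t ht.1.le
        have h3 : 0 ≤ g t ^ δ := Real.rpow_nonneg (hgpos t h0t).le _
        have h4 : 0 ≤ f x ^ γ := Real.rpow_nonneg (hfpos x hx.le).le _
        rw [mul_one]
        exact mul_le_mul_of_nonneg_left (mul_le_mul h1 h2 h3 h4) (hw t ht))
    rw [intervalIntegral.integral_mul_const] at hle
    unfold genKInt at h0 ⊢
    rw [← h0] at hle ⊢
    simpa using hle
  · rw [inv_mul_eq_div, le_div_iff₀ hpos]
    exact hmain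
end
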